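/- Let φ(x) = Σ_{n≥0} φ_n·x^n be a non-polynomial function analytic in a neighborhood of 0 with φ_n ≥ 0 for all n, satisfying E(x, φ(x)) = 0 near 0, where E is an irreducible polynomial whose curve E = 0 admits a real proper rational parametrization P = (x̂, ŷ) with x̂(∞) = ∞. Then: (i) there exists a unique s₀ ∈ ℝ such that (P, s₀) parametrizes φ locally at 0; and (ii) assuming (as can be arranged by replacing s by −s) that x̂′(s₀) > 0, the quantity s_c := inf{s ≥ s₀ : x̂′(s) = 0 or ŷ(s) = ∞} is finite, s_c is a critical point of P, and φ has its dominant singularity at x_c := x̂(s_c) > 0: the radius of convergence of φ equals x_c and φ admits no analytic continuation to any neighborhood of x_c. -/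

import Mathlib

open Polynomial

/-- A rational map of the Riemann sphere, given by a pair of coprime polynomials. -/
structure RationalMap where
  num : Polynomial ℂ
  den : Polynomial ℂ
  den_ne_zero : den ≠ 0
  coprime : IsCoprime num den

namespace RationalMap

/-- The finite-valued function `s ↦ num(s)/den(s)` (junk value `0` at poles). -/
noncomputable def toFun (f : RationalMap) (s : ℂ) : ℂ := f.num.eval s / f.den.eval s

/-- Evaluation as a map to the Riemann sphere `ℂ ∪ {∞}`. -/
noncomputable def eval (f : RationalMap) (s : ℂ) : OnePoint ℂ :=
  if f.den.eval s = 0 then OnePoint.infty else ((f.toFun s : ℂ) : OnePoint ℂ)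

/-- The value of the rational map at the point `∞` of the Riemann sphere. -/
noncomputable def evalInf (f : RationalMap) : OnePoint ℂ :=
  if f.den.degree < f.num.degree then OnePoint.infty
  else ((f.num.coeff f.den.natDegree / f.den.leadingCoeff : ℂ) : OnePoint ℂ)

/-- A rational map is real if (after clearing a common constant) its numerator and
denominator can be written with real coefficients. -/
def IsReal (f : RationalMap) : Prop :=
  ∃ (c : ℂ) (P Q : Polynomial ℝ), c ≠ 0 ∧
    c • f.num = P.map (algebraMap ℝ ℂ) ∧ c • f.den = Q.map (algebraMap ℝ ℂ)

end RationalMap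

/-- Evaluation of a bivariate polynomial `E` at `(x,y)`. -/
noncomputable def evalE (E : MvPolynomial (Fin 2) ℂ) (x y : ℂ) : ℂ :=
  MvPolynomial.eval ![x, y] E

/-- `(X,Y)` is a rational parametrization of the curve `E(x,y) = 0`:
`E(X(s), Y(s)) = 0` for all but finitely many `s ∈ ℂ`. -/
def IsParametrization (E : MvPolynomial (Fin 2) ℂ) (X Y : RationalMap) : Prop :=
  Set.Finite {s : ℂ |
    ¬ (X.den.eval s ≠ 0 ∧ Y.den.eval s ≠ 0 ∧ evalE E (X.toFun s) (Y.toFun s) = 0)}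

/-- The parametrization `(X,Y)` is proper: for all but finitely many points `(x,y)` on the
curve, the equation `(X(s), Y(s)) = (x,y)` has exactly one solution `s ∈ ℂ`. -/
def IsProper (E : MvPolynomial (Fin 2) ℂ) (X Y : RationalMap) : Prop :=
  Set.Finite {P : ℂ × ℂ | evalE E P.1 P.2 = 0 ∧
    ¬ ∃! s : ℂ, X.eval s = ((P.1 : ℂ) : OnePoint ℂ) ∧ Y.eval s = ((P.2 : ℂ) : OnePoint ℂ)}

/-- `s` is a critical point of the parametrization `(X,Y)` if `X′(s) = 0` (as a rational
function, i.e. the numerator `num′·den − num·den′` of the derivative vanishes at `s`) or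
`Y(s) = ∞`. -/
def IsCriticalPt (X Y : RationalMap) (s : ℂ) : Prop :=
  (X.num.derivative * X.den - X.num * X.den.derivative).eval s = 0 ∨ Y.den.eval s = 0

/-! Properness makes the map `t ↦ (X t, Y t)` injective off a finite set. Hence the point
`(x, φ x)`, for small real `x ≠ 0`, has a unique preimage; it is invariant under complex
conjugation, hence real, and `s₀` is the limit of these preimages as `x → 0`.

Move to the right from `s₀`. Up to the first point where `X' = 0` or one of `X`, `Y` has a pole,
`X` increases and `Y = φ ∘ X`: if `X` reached the radius of convergence at a regular point,
inverting `X` there would continue `φ` past it, against Pringsheim's theorem. If there is no such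
point, or if it is a pole of `X`, then `X → ∞` while `Y = O(X ^ N)`, so `φ` is dominated by a power
of `x` on the positive axis and, its coefficients being nonnegative, is a polynomial. So there is a
first critical point `s_c`, and `X s_c` is at most the radius of convergence. If it were smaller,
`φ` would be analytic at `X s_c` and `Y = φ ∘ X` near `s_c`; then `Y` has no pole there, so
`X' s_c = 0`, and `X`, hence also `Y`, takes equal values at distinct points near `s_c`,
contradicting injectivity. -/

open Filter Topology Set Asymptotics
open Bornology (cobounded)
open scoped ComplexConjugate ComplexOrder ENNReal

/-! ### Power series with nonnegative coefficients -/

lemma tendsto_ofReal_nhdsNE (a : ℝ) : Tendsto ((↑) : ℝ → ℂ) (𝓝[≠] a) (𝓝[≠] (a : ℂ)) :=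
  Complex.continuous_ofReal.continuousWithinAt.tendsto_nhdsWithin fun _ =>
    Complex.ofReal_injective.ne

lemma frequently_nhdsNE_ofReal {p : ℂ → Prop} {a : ℝ} (h : ∀ᶠ t : ℝ in 𝓝[<] a, p t) :
    ∃ᶠ z in 𝓝[≠] (a : ℂ), p z :=
  ((tendsto_ofReal_nhdsNE a).mono_left (nhdsLT_le_nhdsNE a)).frequently h.frequently

lemma eventuallyEq_of_eventually_ofReal {f g : ℂ → ℂ} {a : ℝ} (hf : AnalyticAt ℂ f a)
    (hg : AnalyticAt ℂ g a) (h : ∀ᶠ t : ℝ in 𝓝[<] a, f t = g t) : f =ᶠ[𝓝 (a : ℂ)] g :=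
  (hf.frequently_eq_iff_eventually_eq hg).1 (frequently_nhdsNE_ofReal h)

lemma enorm_coe_eq_ofReal {x : ℝ} (hx : 0 ≤ x) : ‖(x : ℂ)‖ₑ = ENNReal.ofReal x := by
  rw [← ofReal_norm, Complex.norm_of_nonneg hx]

lemma tendsto_iteratedDeriv_of_tendstoLocallyUniformlyOn {U : Set ℂ} (hU : IsOpen U) (k : ℕ)
    {F : ℕ → ℂ → ℂ} {f : ℂ → ℂ} (hF : TendstoLocallyUniformlyOn F f atTop U)
    (hd : ∀ n, DifferentiableOn ℂ (F n) U) {z : ℂ} (hz : z ∈ U) :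
    Tendsto (fun n => iteratedDeriv k (F n) z) atTop (𝓝 (iteratedDeriv k f z)) := by
  induction k generalizing F f with
  | zero => simpa using! hF.tendsto_at hz
  | succ k ih =>
    simp only [iteratedDeriv_succ']
    exact ih (hF.deriv (.of_forall hd) hU) fun n => (hd n).deriv hU

lemma nhdsLT_le_map {f : ℝ → ℝ} {a b : ℝ} (hab : a < b) (hf : ContinuousOn f (Icc a b))
    (hmono : StrictMonoOn f (Icc a b)) : 𝓝[<] f b ≤ map f (𝓝[<] b) := by
  intro S hS
  obtain ⟨u, hub, hu⟩ := (mem_nhdsLT_iff_exists_Ioo_subset' hab).1 (mem_map.1 hS)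
  obtain ⟨v, hv, hvb⟩ := exists_between (max_lt hab hub)
  obtain ⟨hav, huv⟩ := max_lt_iff.1 hv
  have hvI : v ∈ Icc a b := ⟨hav.le, hvb.le⟩
  have hIco : Ico (f v) (f b) ⊆ S :=
    (intermediate_value_Ico hvb.le (hf.mono (Icc_subset_Icc_left hav.le))).trans <|
      image_subset_iff.2 fun t ht => hu ⟨huv.trans_le ht.1, ht.2⟩
  exact mem_of_superset (Ico_mem_nhdsLT (hmono hvI (right_mem_Icc.2 hab.le) hvb)) hIco

/-- The power series `∑ c n * x ^ n` has its dominant singularity at `xc`: this is its radius of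
convergence, and it has no analytic continuation to a neighborhood of `xc`. -/
def HasDominantSingularityAt (c : ℕ → ℝ) (xc : ℝ) : Prop :=
  (∀ x : ℂ, ‖x‖ < xc → Summable fun n : ℕ => (c n : ℂ) * x ^ n) ∧
  (∀ x : ℝ, xc < x → ¬ Summable fun n : ℕ => c n * x ^ n) ∧
  ¬ ∃ (g : ℂ → ℂ) (ε : ℝ), 0 < ε ∧
    (∀ w ∈ Metric.ball (xc : ℂ) ε, AnalyticAt ℂ g w) ∧
    ∀ x : ℂ, ‖x‖ < xc → x ∈ Metric.ball (xc : ℂ) ε → g x = ∑' n : ℕ, (c n : ℂ) * x ^ n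

/-- The power series `∑ c n * x ^ n` with real coefficients, as a series over `ℂ`. -/
noncomputable def realSeries (c : ℕ → ℝ) : FormalMultilinearSeries ℂ ℂ ℂ :=
  .ofScalars ℂ fun n => (c n : ℂ)

namespace realSeries

variable {c : ℕ → ℝ}

lemma apply_eq (n : ℕ) (x : ℂ) : realSeries c n (fun _ => x) = c n * x ^ n := by
  rw [realSeries, FormalMultilinearSeries.ofScalars_apply_eq, smul_eq_mul]

lemma hasSum {x : ℂ} (hx : ‖x‖ₑ < (realSeries c).radius) :
    HasSum (fun n => (c n : ℂ) * x ^ n) ((realSeries c).sum x) := by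
  simpa only [apply_eq] using (realSeries c).hasSum (by simpa using hx)

lemma enorm_le_radius {x : ℂ} (hx : Summable fun n => (c n : ℂ) * x ^ n) :
    ‖x‖ₑ ≤ (realSeries c).radius := by
  refine (realSeries c).le_radius_of_tendsto (l := 0) ?_
  simpa [realSeries] using hx.tendsto_atTop_zero.norm

lemma ofReal_le_radius {x : ℝ} (hx : 0 ≤ x) (hs : Summable fun n => c n * x ^ n) :
    ENNReal.ofReal x ≤ (realSeries c).radius := by
  rw [← enorm_coe_eq_ofReal hx]
  exact enorm_le_radius (by exact_mod_cast Complex.summable_ofReal.2 hs)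

lemma analyticAt_sum {x : ℂ} (hx : ‖x‖ₑ < (realSeries c).radius) :
    AnalyticAt ℂ (realSeries c).sum x :=
  ((realSeries c).hasFPowerSeriesOnBall (pos_of_gt hx)).analyticAt_of_mem (by simpa using hx)

lemma conj_eq_of_hasSum {x : ℝ} {y : ℂ} (h : HasSum (fun n => (c n : ℂ) * (x : ℂ) ^ n) y) :
    conj y = y := by
  refine HasSum.unique (Complex.hasSum_conj'.2 h) ?_
  simpa using h

lemma radius_pos_of_eventually {φ : ℂ → ℂ}
    (hφ : ∀ᶠ x in 𝓝 (0 : ℂ), HasSum (fun n => (c n : ℂ) * x ^ n) (φ x)) :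
    0 < (realSeries c).radius := by
  obtain ⟨x, hx, hne⟩ :=
    ((hφ.filter_mono nhdsWithin_le_nhds).and (self_mem_nhdsWithin (s := {0}ᶜ))).exists
  exact (enorm_pos.2 hne).trans_le (enorm_le_radius hx.summable)

lemma eventuallyEq_sum {φ : ℂ → ℂ}
    (hφ : ∀ᶠ x in 𝓝 (0 : ℂ), HasSum (fun n => (c n : ℂ) * x ^ n) (φ x)) :
    φ =ᶠ[𝓝 0] (realSeries c).sum := by
  have hball : ∀ᶠ x : ℂ in 𝓝 0, ‖x‖ₑ < (realSeries c).radius :=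
    continuous_enorm.continuousAt.eventually_lt continuousAt_const
      (by simpa using radius_pos_of_eventually hφ)
  filter_upwards [hφ, hball] with x hx hxr
  exact hx.unique (hasSum hxr)

lemma partialSum_eq (n : ℕ) :
    (realSeries c).partialSum n = fun x => ∑ i ∈ Finset.range n, (c i : ℂ) * x ^ i :=
  funext fun x => Finset.sum_congr rfl fun i _ => apply_eq i x

lemma differentiable_partialSum (n : ℕ) : Differentiable ℂ ((realSeries c).partialSum n) := by
  rw [partialSum_eq]
  fun_prop

lemma monotone_iteratedDeriv_partialSum (hc : ∀ n, 0 ≤ c n) (k : ℕ) {a : ℝ} (ha : 0 ≤ a) :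
    Monotone fun n => iteratedDeriv k ((realSeries c).partialSum n) (a : ℂ) := by
  refine monotone_nat_of_le_succ fun n => ?_
  have hmono : iteratedDeriv k ((realSeries c).partialSum (n + 1)) (a : ℂ) =
      iteratedDeriv k ((realSeries c).partialSum n) (a : ℂ) +
        c n * (n.descFactorial k * (a : ℂ) ^ (n - k)) := by
    simp only [partialSum_eq]
    rw [iteratedDeriv_fun_sum fun i _ => by fun_prop, iteratedDeriv_fun_sum fun i _ => by fun_prop,
      Finset.sum_range_succ, iteratedDeriv_const_mul_field, iteratedDeriv_pow]
  have hterm : 0 ≤ c n * (n.descFactorial k * a ^ (n - k)) := by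
    have := hc n
    positivity
  rw [hmono]
  exact le_add_of_nonneg_right (by exact_mod_cast hterm)

lemma iteratedDeriv_partialSum_le (hc : ∀ n, 0 ≤ c n) (k n : ℕ) {a : ℝ} (ha : 0 ≤ a)
    (har : ENNReal.ofReal a < (realSeries c).radius) :
    iteratedDeriv k ((realSeries c).partialSum n) (a : ℂ) ≤
      iteratedDeriv k (realSeries c).sum (a : ℂ) := by
  rw [← enorm_coe_eq_ofReal ha] at har
  have hunif := ((realSeries c).hasFPowerSeriesOnBall (pos_of_gt har)).tendstoLocallyUniformlyOn
  simp only [zero_add] at hunif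
  exact (monotone_iteratedDeriv_partialSum hc k ha).ge_of_tendsto
    (tendsto_iteratedDeriv_of_tendstoLocallyUniformlyOn Metric.isOpen_eball k hunif
      (fun n => (differentiable_partialSum n).differentiableOn) (by simpa using har)) n

/-- The Taylor coefficients at `a` of the extension minus a partial sum are nonnegative, so the
extension bounds all partial sums at `b`. -/
lemma summable_of_differentiableOn (hc : ∀ n, 0 ≤ c n) {a b ρ : ℝ} (ha : 0 ≤ a) (hab : a ≤ b)
    (hbρ : b < a + ρ) (har : ENNReal.ofReal a < (realSeries c).radius) {g : ℂ → ℂ}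
    (hg : DifferentiableOn ℂ g (Metric.ball a ρ)) (hgc : g =ᶠ[𝓝 (a : ℂ)] (realSeries c).sum) :
    Summable fun n => c n * b ^ n := by
  have hb : (b : ℂ) ∈ Metric.ball (a : ℂ) ρ := by
    rw [Metric.mem_ball, Complex.dist_of_im_eq (by simp), Complex.ofReal_re, Complex.ofReal_re,
      Real.dist_eq, abs_of_nonneg (sub_nonneg.2 hab)]
    linarith
  have hle : ∀ n, (realSeries c).partialSum n b ≤ g b := by
    intro n
    have hdiff : DifferentiableOn ℂ ((realSeries c).partialSum n) (Metric.ball a ρ) :=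
      (differentiable_partialSum n).differentiableOn
    refine sub_nonneg.1 ((hg.sub hdiff).nonneg_of_iteratedDeriv_nonneg (fun k => ?_)
      (by exact_mod_cast hab) hb)
    have hga : ContDiffAt ℂ k g a :=
      (hg.analyticAt (Metric.ball_mem_nhds _ (by linarith))).contDiffAt
    rw [iteratedDeriv_sub hga (differentiable_partialSum n).contDiff.contDiffAt, sub_nonneg,
      hgc.iteratedDeriv_eq]
    exact iteratedDeriv_partialSum_le hc k n ha har
  refine summable_of_sum_range_le (c := (g b).re)
    (fun n => mul_nonneg (hc n) (pow_nonneg (ha.trans hab) n)) fun n => ?_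
  have hre := (Complex.le_def.1 (hle n)).1
  simp only [partialSum_eq] at hre
  exact_mod_cast hre

/-- **Pringsheim's theorem** -/
theorem not_eventually_eq_sum_of_radius_eq (hc : ∀ n, 0 ≤ c n) {R : ℝ} (hR : 0 < R)
    (hrad : (realSeries c).radius = ENNReal.ofReal R) {g : ℂ → ℂ} (hg : AnalyticAt ℂ g R) :
    ¬ ∀ᶠ x : ℝ in 𝓝[<] R, g x = (realSeries c).sum x := by
  intro hgc
  obtain ⟨ε, hε, hball⟩ := Metric.eventually_nhds_iff_ball.1 hg.eventually_analyticAt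
  have hnear : ∀ᶠ a : ℝ in 𝓝[<] R, a ∈ Ioo (max 0 (R - ε / 4)) R :=
    Ioo_mem_nhdsLT (max_lt hR (by linarith))
  obtain ⟨a, hagree, ha⟩ := ((eventually_eventually_nhdsWithin.2 hgc).and hnear).exists
  obtain ⟨ha0, haε⟩ := max_lt_iff.1 ha.1
  have har : ENNReal.ofReal a < (realSeries c).radius :=
    hrad ▸ (ENNReal.ofReal_lt_ofReal_iff hR).2 ha.2
  have hsub : Metric.ball (a : ℂ) (ε / 2) ⊆ Metric.ball (R : ℂ) ε := by
    refine Metric.ball_subset_ball' ?_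
    rw [Complex.dist_of_im_eq (by simp), Complex.ofReal_re, Complex.ofReal_re, dist_comm,
      Real.dist_eq, abs_of_pos (sub_pos.2 ha.2)]
    linarith
  have hga : g =ᶠ[𝓝 (a : ℂ)] (realSeries c).sum :=
    eventuallyEq_of_eventually_ofReal (hball a (hsub (Metric.mem_ball_self (by linarith))))
      (analyticAt_sum (enorm_coe_eq_ofReal ha0.le ▸ har))
      ((nhdsWithin_eq_nhds.2 (Iio_mem_nhds ha.2) ▸ hagree).filter_mono nhdsWithin_le_nhds)
  have hsum : Summable fun n => c n * (R + ε / 4) ^ n :=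
    summable_of_differentiableOn hc ha0.le (by linarith [ha.2]) (by linarith) har
      (fun z hz => (hball z (hsub hz)).differentiableAt.differentiableWithinAt) hga
  have hle := hrad ▸ ofReal_le_radius (by positivity) hsum
  rw [ENNReal.ofReal_le_ofReal_iff hR.le] at hle
  linarith

lemma hasDominantSingularityAt (hc : ∀ n, 0 ≤ c n) {R : ℝ} (hR : 0 < R)
    (hrad : (realSeries c).radius = ENNReal.ofReal R) : HasDominantSingularityAt c R := by
  have hsum : ∀ x : ℂ, ‖x‖ < R →
      HasSum (fun n => (c n : ℂ) * x ^ n) ((realSeries c).sum x) := fun x hx =>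
    hasSum (by rwa [hrad, ← ofReal_norm, ENNReal.ofReal_lt_ofReal_iff hR])
  refine ⟨fun x hx => (hsum x hx).summable, fun x hx hs => ?_, ?_⟩
  · have hle := ofReal_le_radius (hR.trans hx).le hs
    rw [hrad, ENNReal.ofReal_le_ofReal_iff hR.le] at hle
    exact hx.not_ge hle
  · rintro ⟨g, ε, hε, hg, hgsum⟩
    refine not_eventually_eq_sum_of_radius_eq hc hR hrad (hg _ (Metric.mem_ball_self hε)) ?_
    have hball : ∀ᶠ x : ℝ in 𝓝[<] R, (x : ℂ) ∈ Metric.ball (R : ℂ) ε :=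
      Complex.continuous_ofReal.continuousWithinAt.eventually (Metric.ball_mem_nhds _ hε)
    filter_upwards [hball, Ico_mem_nhdsLT hR] with x hxε hx
    have hxR : ‖(x : ℂ)‖ < R := (Complex.norm_of_nonneg hx.1).trans_lt hx.2
    rw [hgsum x hxR hxε, (hsum x hxR).tsum_eq]

end realSeries

lemma coeff_eq_zero_of_isBigO_pow {ι : Type*} {l : Filter ι} [l.NeBot] {c : ℕ → ℝ}
    (hc : ∀ n, 0 ≤ c n) {ξ : ι → ℝ} {η : ι → ℂ} (hξ : Tendsto ξ l atTop)
    (hsum : ∀ᶠ i in l, HasSum (fun n => (c n : ℂ) * (ξ i : ℂ) ^ n) (η i)) {N n : ℕ}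
    (hη : η =O[l] fun i => ξ i ^ N) (hn : N < n) : c n = 0 := by
  by_contra hcn
  have hterm : (fun i => c n * ξ i ^ n) =O[l] η := by
    refine IsBigO.of_bound' ?_
    filter_upwards [hsum, hξ.eventually_ge_atTop 0] with i hi hξi
    have hpos : ∀ m, 0 ≤ c m * ξ i ^ m := fun m => mul_nonneg (hc m) (pow_nonneg hξi m)
    have hre : HasSum (fun m => c m * ξ i ^ m) (η i).re := by
      simpa only [← Complex.ofReal_pow, ← Complex.ofReal_mul, Complex.ofReal_re] using!
        Complex.hasSum_re hi
    rw [Real.norm_of_nonneg (hpos n)]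
    exact (le_hasSum hre n fun m _ => hpos m).trans (Complex.re_le_norm _)
  have hpow : (fun i => ξ i ^ n) =o[l] fun i => ξ i ^ n :=
    (((isBigO_const_mul_left_iff hcn).1 hterm).trans hη).trans_isLittleO
      ((isLittleO_pow_pow_atTop_of_lt hn).comp_tendsto hξ)
  refine isLittleO_irrefl ?_ hpow
  exact ((hξ.eventually_gt_atTop 0).mono fun i hi => (pow_pos hi n).ne').frequently

/-! ### Deck transformations -/

lemma exists_analyticAt_pow_eq {u : ℂ → ℂ} {z₀ : ℂ} (hu : AnalyticAt ℂ u z₀) (hu₀ : u z₀ ≠ 0)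
    {k : ℕ} (hk : k ≠ 0) : ∃ v : ℂ → ℂ, AnalyticAt ℂ v z₀ ∧ ∀ᶠ z in 𝓝 z₀, v z ^ k = u z := by
  obtain ⟨w, hw⟩ := IsAlgClosed.exists_pow_nat_eq (u z₀) (Nat.pos_of_ne_zero hk)
  refine ⟨fun z => w * (u z / u z₀) ^ (k : ℂ)⁻¹, ?_, .of_forall fun z => ?_⟩
  · have hquot : AnalyticAt ℂ (fun z => u z / u z₀) z₀ := hu.div analyticAt_const hu₀
    exact analyticAt_const.mul (hquot.cpow analyticAt_const (by simp [div_self hu₀]))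
  · rw [mul_pow, hw, Complex.cpow_nat_inv_pow _ hk, mul_div_cancel₀ _ hu₀]

lemma exists_eventually_eq_add_pow {f : ℂ → ℂ} {z₀ : ℂ} (hf : AnalyticAt ℂ f z₀)
    (hconst : ¬ ∀ᶠ z in 𝓝 z₀, f z = f z₀) :
    ∃ (k : ℕ) (h : ℂ → ℂ), k ≠ 0 ∧ AnalyticAt ℂ h z₀ ∧ h z₀ = 0 ∧ deriv h z₀ ≠ 0 ∧
      ∀ᶠ z in 𝓝 z₀, f z = f z₀ + h z ^ k := by
  obtain ⟨k, u, hu, hu₀, hfu⟩ :=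
    (hf.sub analyticAt_const).exists_eventuallyEq_pow_smul_nonzero_iff.2
      (by simpa only [Pi.sub_apply, sub_eq_zero] using hconst)
  have hk : k ≠ 0 := by
    rintro rfl
    exact hu₀ (by simpa using hfu.self_of_nhds.symm)
  obtain ⟨v, hv, hvu⟩ := exists_analyticAt_pow_eq hu hu₀ hk
  have hderiv : HasDerivAt (fun z => (z - z₀) * v z) (v z₀) z₀ := by
    simpa using! ((hasDerivAt_id z₀).sub_const z₀).mul hv.differentiableAt.hasDerivAt
  refine ⟨k, fun z => (z - z₀) * v z, hk, (analyticAt_id.sub analyticAt_const).mul hv, by simp,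
    ?_, ?_⟩
  · rw [hderiv.deriv]
    intro hv₀
    exact hu₀ (by rw [← hvu.self_of_nhds, hv₀, zero_pow hk])
  · filter_upwards [hfu, hvu] with z hz hvz
    rw [mul_pow, hvz, ← smul_eq_mul, ← hz]
    simp

lemma exists_local_inverse {h : ℂ → ℂ} {z₀ : ℂ} (hh : AnalyticAt ℂ h z₀) (hh' : deriv h z₀ ≠ 0) :
    ∃ ψ : ℂ → ℂ, AnalyticAt ℂ ψ (h z₀) ∧ ψ (h z₀) = z₀ ∧ (∀ᶠ z in 𝓝 z₀, ψ (h z) = z) ∧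
      ∀ᶠ w in 𝓝 (h z₀), h (ψ w) = w :=
  ⟨_, hh.analyticAt_localInverse hh',
    (hh.hasStrictDerivAt.eventually_left_inverse hh').self_of_nhds,
    hh.hasStrictDerivAt.eventually_left_inverse hh',
    hh.hasStrictDerivAt.eventually_right_inverse hh'⟩

/-- Near a critical point `f` is a `k`-th power with `k ≥ 2` in a local coordinate, and the
deck transformation multiplies that coordinate by a primitive `k`-th root of unity. -/
lemma exists_deck_transformation {f : ℂ → ℂ} {z₀ : ℂ} (hf : AnalyticAt ℂ f z₀)
    (hconst : ¬ ∀ᶠ z in 𝓝 z₀, f z = f z₀) (hderiv : deriv f z₀ = 0) :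
    ∃ τ : ℂ → ℂ, Tendsto τ (𝓝 z₀) (𝓝 z₀) ∧ ∀ᶠ z in 𝓝[≠] z₀, τ z ≠ z ∧ f (τ z) = f z := by
  obtain ⟨k, h, hk, hh, hh₀, hh', hfh⟩ := exists_eventually_eq_add_pow hf hconst
  have hk1 : k ≠ 1 := by
    rintro rfl
    simp only [pow_one] at hfh
    rw [EventuallyEq.deriv_eq hfh, deriv_const_add] at hderiv
    exact hh' hderiv
  set ζ := Complex.exp (2 * Real.pi * Complex.I / k)
  have hζ : IsPrimitiveRoot ζ k := Complex.isPrimitiveRoot_exp k hk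
  obtain ⟨ψ, hψ, hψ₀, -, hright⟩ := exists_local_inverse hh hh'
  have hrot : Tendsto (fun z => ζ * h z) (𝓝 z₀) (𝓝 (h z₀)) := by
    have hlim := hh.continuousAt.tendsto.const_mul ζ
    rwa [hh₀, mul_zero, ← hh₀] at hlim
  have hτ : Tendsto (fun z => ψ (ζ * h z)) (𝓝 z₀) (𝓝 z₀) :=
    Tendsto.comp (by simpa only [hψ₀] using hψ.continuousAt.tendsto) hrot
  have hhτ : ∀ᶠ z in 𝓝 z₀, h (ψ (ζ * h z)) = ζ * h z :=
    hrot.eventually hright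
  have hne : ∀ᶠ z in 𝓝[≠] z₀, h z ≠ 0 := hh.differentiableAt.hasDerivAt.eventually_ne hh'
  refine ⟨fun z => ψ (ζ * h z), hτ, ?_⟩
  filter_upwards [hne, hhτ.filter_mono nhdsWithin_le_nhds, hfh.filter_mono nhdsWithin_le_nhds,
    (hτ.eventually hfh).filter_mono nhdsWithin_le_nhds] with z hz hhz hfz hfτ
  refine ⟨fun hfix => ?_, ?_⟩
  · rw [hfix] at hhz
    exact hζ.ne_one (by omega) (mul_right_cancel₀ hz (by rw [← hhz, one_mul]))
  · rw [hfτ, hhz, mul_pow, hζ.pow_eq_one, one_mul, hfz]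

/-! ### Rational maps -/

namespace RationalMap

/-- `f` is not a constant map; the encoding makes sense also where the denominator vanishes. -/
def IsNonconstant (f : RationalMap) : Prop := ∀ y : ℂ, f.num ≠ C y * f.den

variable {f X Y : RationalMap} {s y : ℂ}

lemma eval_eq_coe_iff : f.eval s = (y : OnePoint ℂ) ↔ f.den.eval s ≠ 0 ∧ f.toFun s = y := by
  unfold eval
  split_ifs with h <;> simp [h]

lemma eval_eq_coe_toFun (hs : f.den.eval s ≠ 0) : f.eval s = (f.toFun s : OnePoint ℂ) :=
  eval_eq_coe_iff.2 ⟨hs, rfl⟩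

lemma num_ne_zero_of_den_eq_zero (hs : f.den.eval s = 0) : f.num.eval s ≠ 0 := by
  obtain ⟨a, b, hab⟩ := f.coprime
  intro hnum
  simpa [hs, hnum] using congrArg (Polynomial.eval s) hab

lemma eval_eq_coe_of_num_eq (h : f.num.eval s = y * f.den.eval s) :
    f.eval s = (y : OnePoint ℂ) := by
  have hden : f.den.eval s ≠ 0 := fun h₀ =>
    num_ne_zero_of_den_eq_zero h₀ (by rw [h, h₀, mul_zero])
  exact eval_eq_coe_iff.2 ⟨hden, by rw [toFun, h, mul_div_cancel_right₀ _ hden]⟩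

lemma num_eq_of_eval_eq_coe (h : f.eval s = (y : OnePoint ℂ)) :
    f.num.eval s = y * f.den.eval s := by
  obtain ⟨hden, rfl⟩ := eval_eq_coe_iff.1 h
  rw [toFun, div_mul_cancel₀ _ hden]

lemma eval_eq_coe_of_tendsto {ι : Type*} {l : Filter ι} [l.NeBot] {u v : ι → ℂ}
    (hu : Tendsto u l (𝓝 s)) (hv : Tendsto v l (𝓝 y))
    (h : ∀ᶠ i in l, f.eval (u i) = (v i : OnePoint ℂ)) : f.eval s = (y : OnePoint ℂ) :=
  eval_eq_coe_of_num_eq <| tendsto_nhds_unique_of_eventuallyEq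
    ((f.num.continuous.tendsto s).comp hu) (hv.mul ((f.den.continuous.tendsto s).comp hu))
    (h.mono fun _ => num_eq_of_eval_eq_coe)

lemma eventually_den_ne_zero (hs : f.den.eval s ≠ 0) : ∀ᶠ t in 𝓝 s, f.den.eval t ≠ 0 :=
  f.den.continuous.continuousAt.eventually_ne hs

lemma eventually_cofinite_den_ne_zero (f : RationalMap) : ∀ᶠ t in cofinite, f.den.eval t ≠ 0 :=
  (finite_setOfPred_isRoot f.den_ne_zero).compl_mem_cofinite

lemma analyticAt_toFun (hs : f.den.eval s ≠ 0) : AnalyticAt ℂ f.toFun s :=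
  (f.num.differentiable.analyticAt s).div (f.den.differentiable.analyticAt s) hs

lemma deriv_toFun (hs : f.den.eval s ≠ 0) :
    deriv f.toFun s =
      (f.num.derivative * f.den - f.num * f.den.derivative).eval s / f.den.eval s ^ 2 := by
  simpa using! ((f.num.hasDerivAt s).div (f.den.hasDerivAt s) hs).deriv

lemma degree_lt_of_evalInf (hinf : f.evalInf = OnePoint.infty) : f.den.degree < f.num.degree := by
  unfold evalInf at hinf
  split_ifs at hinf with h
  exacts [h, absurd hinf (OnePoint.coe_ne_infty _)]

lemma isNonconstant_of_evalInf (hinf : f.evalInf = OnePoint.infty) : f.IsNonconstant := by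
  intro y hy
  refine (degree_lt_of_evalInf hinf).not_ge ?_
  rw [hy, degree_mul]
  exact add_le_of_nonpos_left degree_C_le

namespace IsNonconstant

lemma tendsto_cofinite (hf : f.IsNonconstant) : Tendsto f.toFun cofinite cofinite := by
  refine Tendsto.cofinite_of_finite_preimage_singleton fun y => ?_
  refine ((finite_setOfPred_isRoot f.den_ne_zero).union
    (finite_setOfPred_isRoot (sub_ne_zero.2 (hf y)))).subset fun t ht => ?_
  rw [mem_preimage, mem_singleton_iff] at ht
  by_cases hden : f.den.eval t = 0
  · exact .inl hden
  · refine .inr ?_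
    simp [num_eq_of_eval_eq_coe (eval_eq_coe_iff.2 ⟨hden, ht⟩)]

lemma not_eventually_eq (hf : f.IsNonconstant) (s y : ℂ) : ¬ ∀ᶠ t in 𝓝 s, f.toFun t = y := by
  intro hconst
  have hne : ∀ᶠ t in 𝓝[≠] s, f.toFun t ≠ y :=
    nhdsNE_le_cofinite s (hf.tendsto_cofinite.eventually (eventually_cofinite_ne y))
  obtain ⟨t, hty, hconst_t⟩ := (hne.and (hconst.filter_mono nhdsWithin_le_nhds)).exists
  exact hty hconst_t

lemma nhds_le_map (hf : f.IsNonconstant) (hs : f.den.eval s ≠ 0) :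
    𝓝 (f.toFun s) ≤ map f.toFun (𝓝 s) :=
  (f.analyticAt_toFun hs).eventually_constant_or_nhds_le_map_nhds.resolve_left
    (hf.not_eventually_eq s _)

end IsNonconstant

lemma num_ne_zero_of_evalInf (hinf : f.evalInf = OnePoint.infty) : f.num ≠ 0 := by
  simpa using isNonconstant_of_evalInf hinf 0

lemma IsReal.exists_smul_eval_conj (hf : f.IsReal) : ∃ a : ℂ, a ≠ 0 ∧ ∀ s : ℂ,
    a * f.num.eval (conj s) = conj (a * f.num.eval s) ∧
      a * f.den.eval (conj s) = conj (a * f.den.eval s) := by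
  obtain ⟨a, P, Q, ha, hP, hQ⟩ := hf
  have hconj : ∀ {p : ℂ[X]} {q : ℝ[X]}, a • p = q.map (algebraMap ℝ ℂ) → ∀ s : ℂ,
      a * p.eval (conj s) = conj (a * p.eval s) := by
    intro p q hpq s
    rw [← smul_eq_mul, ← smul_eq_mul, ← eval_smul, ← eval_smul, hpq, eval_map_algebraMap,
      eval_map_algebraMap]
    exact aeval_conj q s
  exact ⟨a, ha, fun s => ⟨hconj hP s, hconj hQ s⟩⟩

lemma IsReal.eval_conj (hf : f.IsReal) (h : f.eval s = (y : OnePoint ℂ)) :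
    f.eval (conj s) = ((conj y : ℂ) : OnePoint ℂ) := by
  obtain ⟨a, ha, hconj⟩ := hf.exists_smul_eval_conj
  refine eval_eq_coe_of_num_eq (mul_left_cancel₀ ha ?_)
  rw [(hconj s).1, mul_left_comm, (hconj s).2, num_eq_of_eval_eq_coe h]
  simp only [map_mul]
  ring

/-- The real part of `f` on the real line. For real `f` this is `f` itself, as a real function. -/
noncomputable def realFun (f : RationalMap) (t : ℝ) : ℝ := (f.toFun t).re

lemma IsReal.ofReal_realFun (hf : f.IsReal) {t : ℝ} (ht : f.den.eval (t : ℂ) ≠ 0) :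
    (f.realFun t : ℂ) = f.toFun t := by
  have hconj := hf.eval_conj (eval_eq_coe_toFun ht)
  rw [Complex.conj_ofReal, eval_eq_coe_toFun ht, OnePoint.coe_eq_coe] at hconj
  exact Complex.conj_eq_iff_re.1 hconj.symm

lemma hasDerivAt_realFun {t : ℝ} (ht : f.den.eval (t : ℂ) ≠ 0) :
    HasDerivAt f.realFun (deriv f.toFun t).re t :=
  (analyticAt_toFun ht).differentiableAt.hasDerivAt.real_of_complex

lemma IsReal.ofReal_re_deriv (hf : f.IsReal) {t : ℝ} (ht : f.den.eval (t : ℂ) ≠ 0) :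
    ((deriv f.toFun t).re : ℂ) = deriv f.toFun t := by
  have heq : (fun u : ℝ => (f.realFun u : ℂ)) =ᶠ[𝓝 t] fun u : ℝ => f.toFun u :=
    (Complex.continuous_ofReal.continuousAt.eventually (eventually_den_ne_zero ht)).mono
      fun u hu => hf.ofReal_realFun hu
  exact (hasDerivAt_realFun ht).ofReal_comp.unique
    ((analyticAt_toFun ht).differentiableAt.hasDerivAt.comp_ofReal.congr_of_eventuallyEq heq)

lemma tendsto_toFun_cobounded {l : Filter ℂ} (hl : l ≤ cofinite) (hnum : f.num ≠ 0)
    (hlim : Tendsto (fun t => f.den.eval t / f.num.eval t) l (𝓝 0)) :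
    Tendsto f.toFun l (cobounded ℂ) := by
  have hne : ∀ᶠ t in l, f.den.eval t / f.num.eval t ≠ 0 := by
    filter_upwards [hl (finite_setOfPred_isRoot hnum).compl_mem_cofinite,
      hl f.eventually_cofinite_den_ne_zero] with t hn hd
    exact div_ne_zero hd hn
  refine (tendsto_inv₀_nhdsNE_zero.comp (tendsto_nhdsWithin_iff.2 ⟨hlim, hne⟩)).congr fun t => ?_
  rw [Function.comp_apply, inv_div, toFun]

lemma tendsto_toFun_nhdsNE (hs : f.den.eval s = 0) : Tendsto f.toFun (𝓝[≠] s) (cobounded ℂ) := by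
  have hnum := num_ne_zero_of_den_eq_zero hs
  refine tendsto_toFun_cobounded (nhdsNE_le_cofinite s) (fun h => hnum (by rw [h, eval_zero])) ?_
  have hcont := (f.den.continuous.continuousAt (x := s)).div f.num.continuous.continuousAt hnum
  simpa [hs] using! hcont.tendsto.mono_left nhdsWithin_le_nhds

lemma tendsto_toFun_atInf (hinf : f.evalInf = OnePoint.infty) :
    Tendsto f.toFun (cobounded ℂ) (cobounded ℂ) :=
  tendsto_toFun_cobounded (Bornology.le_cofinite ℂ) (num_ne_zero_of_evalInf hinf)
    (isLittleO_cobounded_of_degree_lt (degree_lt_of_evalInf hinf)).tendsto_div_nhds_zero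

lemma isBigO_pow_of_isBigO {l : Filter ℂ} (hl : l ≤ cofinite) {u : ℂ → ℂ} {N : ℕ}
    (hX : (fun t => u t * X.den.eval t) =O[l] X.num.eval)
    (hY : Y.num.eval =O[l] fun t => u t ^ N * Y.den.eval t) :
    Y.toFun =O[l] fun t => X.toFun t ^ N := by
  have hXu : u =O[l] X.toFun := by
    refine ((hX.mul (isBigO_refl (fun t => (X.den.eval t)⁻¹) l)).congr' ?_ ?_)
    · filter_upwards [hl X.eventually_cofinite_den_ne_zero] with t ht
      exact mul_inv_cancel_right₀ ht _
    · exact .of_forall fun t => (div_eq_mul_inv _ _).symm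
  have hYu : Y.toFun =O[l] fun t => u t ^ N := by
    refine ((hY.mul (isBigO_refl (fun t => (Y.den.eval t)⁻¹) l)).congr' ?_ ?_)
    · exact .of_forall fun t => (div_eq_mul_inv _ _).symm
    · filter_upwards [hl Y.eventually_cofinite_den_ne_zero] with t ht
      exact mul_inv_cancel_right₀ ht _
  exact hYu.trans (hXu.pow N)

lemma exists_isBigO_pow_atInf (Y : RationalMap) (hinf : X.evalInf = OnePoint.infty) :
    ∃ N : ℕ, Y.toFun =O[cobounded ℂ] fun t => X.toFun t ^ N := by
  refine ⟨Y.num.natDegree,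
    isBigO_pow_of_isBigO (Bornology.le_cofinite ℂ) (u := fun t => t) ?_ ?_⟩
  · have hdeg : (Polynomial.X * X.den).degree ≤ X.num.degree := by
      have hlt := natDegree_lt_natDegree X.den_ne_zero (degree_lt_of_evalInf hinf)
      rw [mul_comm, degree_mul_X, degree_eq_natDegree X.den_ne_zero,
        degree_eq_natDegree (num_ne_zero_of_evalInf hinf)]
      exact_mod_cast hlt
    simpa using isBigO_cobounded_of_degree_le hdeg
  · have hdeg : Y.num.degree ≤ (Polynomial.X ^ Y.num.natDegree * Y.den).degree := by
      rw [degree_mul, degree_X_pow]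
      exact degree_le_natDegree.trans (le_add_of_nonneg_right (zero_le_degree_iff.2 Y.den_ne_zero))
    simpa using isBigO_cobounded_of_degree_le hdeg

lemma exists_isBigO_pow_nhdsNE (Y : RationalMap) {σ : ℂ} (hσ : X.den.eval σ = 0) :
    ∃ N : ℕ, Y.toFun =O[𝓝[≠] σ] fun t => X.toFun t ^ N := by
  have hO : ∀ p q : ℂ[X], q.eval σ ≠ 0 → p.eval =O[𝓝[≠] σ] q.eval := fun p q hq =>
    (isBigO_of_div_tendsto_nhds
      ((q.continuous.continuousAt.eventually_ne hq).mono fun t ht ht₀ => absurd ht₀ ht) _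
      (p.continuous.continuousAt.div q.continuous.continuousAt hq)).mono nhdsWithin_le_nhds
  obtain ⟨p, hp⟩ := dvd_iff_isRoot.2 hσ
  obtain ⟨q, hq, hqσ⟩ := Y.den.exists_eq_pow_rootMultiplicity_mul_and_not_dvd Y.den_ne_zero σ
  rw [dvd_iff_isRoot] at hqσ
  refine ⟨Y.den.rootMultiplicity σ,
    isBigO_pow_of_isBigO (nhdsNE_le_cofinite σ) (u := fun t => (t - σ)⁻¹) ?_ ?_⟩
  · refine (hO p X.num (num_ne_zero_of_den_eq_zero hσ)).congr' ?_ .rfl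
    filter_upwards [self_mem_nhdsWithin] with t ht
    rw [hp, eval_mul, eval_sub, eval_X, eval_C, inv_mul_cancel_left₀ (sub_ne_zero.2 ht)]
  · refine (hO Y.num q hqσ).congr' .rfl ?_
    filter_upwards [self_mem_nhdsWithin] with t ht
    have hpow : (t - σ) ^ Y.den.rootMultiplicity σ ≠ 0 := pow_ne_zero _ (sub_ne_zero.2 ht)
    have hden := congrArg (Polynomial.eval t) hq
    simp only [eval_mul, eval_pow, eval_sub, eval_X, eval_C] at hden
    rw [hden, inv_pow, inv_mul_cancel_left₀ hpow]

end RationalMap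

/-! ### Parametrizations of germs -/

section Parametrization

variable {X Y : RationalMap}

/-- `s` is a regular point of the parametrization `(X, Y)`: `X` is finite at `s` and `s` is not
critical. -/
def IsRegularPt (X Y : RationalMap) (s : ℂ) : Prop := X.den.eval s ≠ 0 ∧ ¬ IsCriticalPt X Y s

/-- The pair `(X, Y)` is injective off a finite set; this is what properness says about the
parametrization itself, without reference to the curve. -/
def GenericallyInjective (X Y : RationalMap) : Prop :=
  ∀ᶠ t in cofinite, ∀ t', X.eval t' = X.eval t → Y.eval t' = Y.eval t → t' = t

/-- `((X, Y), s)` parametrizes the germ of `φ` at `a`. -/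
def ParametrizesAt (X Y : RationalMap) (φ : ℂ → ℂ) (a s : ℂ) : Prop :=
  X.eval s = (a : OnePoint ℂ) ∧ ∀ᶠ t in 𝓝 s, Y.eval t = (φ (X.toFun t) : OnePoint ℂ)

lemma isCriticalPt_iff {s : ℂ} (hs : X.den.eval s ≠ 0) :
    IsCriticalPt X Y s ↔ deriv X.toFun s = 0 ∨ Y.den.eval s = 0 := by
  rw [IsCriticalPt, RationalMap.deriv_toFun hs, div_eq_zero_iff]
  simp [hs]

lemma isRegularPt_iff {s : ℂ} :
    IsRegularPt X Y s ↔ X.den.eval s ≠ 0 ∧ deriv X.toFun s ≠ 0 ∧ Y.den.eval s ≠ 0 := by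
  rw [IsRegularPt, and_congr_right_iff]
  intro hs
  rw [isCriticalPt_iff hs, not_or]

lemma isClosed_setOf_not_isRegularPt (X Y : RationalMap) :
    IsClosed {s : ℂ | ¬ IsRegularPt X Y s} := by
  have hset : {s : ℂ | ¬ IsRegularPt X Y s} = {s | X.den.eval s = 0} ∪
      ({s | (X.num.derivative * X.den - X.num * X.den.derivative).eval s = 0} ∪
        {s | Y.den.eval s = 0}) := by
    ext s
    simp only [IsRegularPt, IsCriticalPt, mem_ofPred_eq, mem_union]
    tauto
  rw [hset]
  exact (isClosed_singleton.preimage X.den.continuous).union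
    ((isClosed_singleton.preimage (Polynomial.continuous _)).union
      (isClosed_singleton.preimage Y.den.continuous))

lemma IsRegularPt.exists_eventuallyEq_comp {s : ℂ} (hs : IsRegularPt X Y s) :
    ∃ g : ℂ → ℂ, AnalyticAt ℂ g (X.toFun s) ∧ ∀ᶠ t in 𝓝 s, Y.toFun t = g (X.toFun t) := by
  obtain ⟨hX, hX', hY⟩ := isRegularPt_iff.1 hs
  obtain ⟨ψ, hψ, hψs, hleft, -⟩ := exists_local_inverse (RationalMap.analyticAt_toFun hX) hX'
  exact ⟨Y.toFun ∘ ψ, (RationalMap.analyticAt_toFun (by rwa [hψs])).comp hψ,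
    hleft.mono fun t ht => by rw [Function.comp_apply, ht]⟩

lemma eventually_eval_eq_of_frequently {s : ℂ} (hX : X.den.eval s ≠ 0) {g : ℂ → ℂ}
    (hg : AnalyticAt ℂ g (X.toFun s))
    (h : ∃ᶠ t in 𝓝[≠] s, Y.eval t = (g (X.toFun t) : OnePoint ℂ)) :
    ∀ᶠ t in 𝓝 s, Y.eval t = (g (X.toFun t) : OnePoint ℂ) := by
  have hcomp : AnalyticAt ℂ (fun t => g (X.toFun t) * Y.den.eval t) s :=
    (hg.comp (RationalMap.analyticAt_toFun hX)).mul (Y.den.differentiable.analyticAt s)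
  exact (((Y.num.differentiable.analyticAt s).frequently_eq_iff_eventually_eq hcomp).1
    (h.mono fun _ => RationalMap.num_eq_of_eval_eq_coe)).mono
      fun _ => RationalMap.eval_eq_coe_of_num_eq

lemma ParametrizesAt.congr {φ ψ : ℂ → ℂ} {a s : ℂ} (h : ParametrizesAt X Y φ a s)
    (hφψ : φ =ᶠ[𝓝 a] ψ) : ParametrizesAt X Y ψ a s := by
  obtain ⟨hden, rfl⟩ := RationalMap.eval_eq_coe_iff.1 h.1
  refine ⟨h.1, ?_⟩
  filter_upwards [h.2, (RationalMap.analyticAt_toFun hden).continuousAt.eventually hφψ]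
    with t ht htφ
  rw [ht, htφ]

lemma IsProper.eventually_exists_eval_eq {E : MvPolynomial (Fin 2) ℂ} (hprop : IsProper E X Y)
    {φ : ℂ → ℂ} {a : ℂ} (hE : ∀ᶠ x in 𝓝[≠] a, evalE E x (φ x) = 0) :
    ∀ᶠ x : ℂ in 𝓝[≠] a, ∃ s, X.eval s = (x : OnePoint ℂ) ∧ Y.eval s = (φ x : OnePoint ℂ) := by
  filter_upwards [hE, nhdsNE_le_cofinite a (hprop.image Prod.fst).compl_mem_cofinite] with x hx hxP
  by_contra hns
  exact hxP ⟨(x, φ x), ⟨hx, fun huniq => hns huniq.exists⟩, rfl⟩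

lemma IsProper.genericallyInjective {E : MvPolynomial (Fin 2) ℂ} (hprop : IsProper E X Y)
    (hpar : IsParametrization E X Y) (hXc : X.IsNonconstant) : GenericallyInjective X Y := by
  filter_upwards [hpar.compl_mem_cofinite,
    hXc.tendsto_cofinite (hprop.image Prod.fst).compl_mem_cofinite] with t ht htP t' hX hY
  obtain ⟨hXt, hYt, hE⟩ := not_not.1 ht
  rw [RationalMap.eval_eq_coe_toFun hXt] at hX
  rw [RationalMap.eval_eq_coe_toFun hYt] at hY
  by_contra hne
  exact htP ⟨(X.toFun t, Y.toFun t), ⟨hE, fun huniq => hne <| huniq.unique ⟨hX, hY⟩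
    ⟨RationalMap.eval_eq_coe_toFun hXt, RationalMap.eval_eq_coe_toFun hYt⟩⟩, rfl⟩

namespace GenericallyInjective

/-- At a zero of `X'` the deck transformation of `X` would also preserve `Y = g ∘ X`. -/
lemma not_isCriticalPt (hinj : GenericallyInjective X Y) (hXc : X.IsNonconstant) {s : ℂ}
    (hX : X.den.eval s ≠ 0) {g : ℂ → ℂ} (hg : AnalyticAt ℂ g (X.toFun s))
    (h : ∃ᶠ t in 𝓝[≠] s, Y.eval t = (g (X.toFun t) : OnePoint ℂ)) : ¬ IsCriticalPt X Y s := by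
  have hY := eventually_eval_eq_of_frequently hX hg h
  rw [isCriticalPt_iff hX, not_or]
  refine ⟨fun hX' => ?_, (RationalMap.eval_eq_coe_iff.1 hY.self_of_nhds).1⟩
  obtain ⟨τ, hτ, hdeck⟩ :=
    exists_deck_transformation (RationalMap.analyticAt_toFun hX) (hXc.not_eventually_eq s _) hX'
  have hgood := (RationalMap.eventually_den_ne_zero hX).and hY
  obtain ⟨t, ⟨hne, hXτ⟩, hinjt, ⟨hdt, hYt⟩, hdτ, hYτ⟩ := (hdeck.and <|
    (hinj.filter_mono (nhdsNE_le_cofinite s)).and <|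
      (hgood.and (hτ.eventually hgood)).filter_mono nhdsWithin_le_nhds).exists
  refine hne (hinjt (τ t) ?_ (by rw [hYτ, hYt, hXτ]))
  rw [RationalMap.eval_eq_coe_toFun hdτ, RationalMap.eval_eq_coe_toFun hdt, hXτ]

lemma eventually_eq_of_eval_eq (hinj : GenericallyInjective X Y) :
    ∀ᶠ x : ℂ in cofinite, ∀ t t', X.eval t = (x : OnePoint ℂ) → X.eval t' = (x : OnePoint ℂ) →
      Y.eval t' = Y.eval t → t' = t := by
  have hfin := (Set.Finite.image X.eval hinj).preimage
    (OnePoint.coe_injective (X := ℂ)).injOn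
  refine hfin.subset fun x hx => ?_
  by_contra hmem
  refine hx fun t t' ht ht' hY => ?_
  by_contra hne
  exact hmem ⟨t, fun hall => hne (hall t' (ht'.trans ht.symm) hY), ht⟩

lemma parametrizesAt_unique (hinj : GenericallyInjective X Y) (hXc : X.IsNonconstant)
    {φ : ℂ → ℂ} {a s s' : ℂ} (hs : ParametrizesAt X Y φ a s) (hs' : ParametrizesAt X Y φ a s') :
    s = s' := by
  by_contra hne
  have himage : ∀ {u : ℂ} {U : Set ℂ}, ParametrizesAt X Y φ a u → U ∈ 𝓝 u →
      ∀ᶠ x : ℂ in 𝓝 a, ∃ t ∈ U, X.eval t = (x : OnePoint ℂ) ∧ Y.eval t = (φ x : OnePoint ℂ) := by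
    intro u U hu hU
    obtain ⟨hden, rfl⟩ := RationalMap.eval_eq_coe_iff.1 hu.1
    refine hXc.nhds_le_map hden (mem_map.2 ?_)
    filter_upwards [hU, RationalMap.eventually_den_ne_zero hden, hu.2] with t htU htX htY
    exact ⟨t, htU, RationalMap.eval_eq_coe_toFun htX, htY⟩
  obtain ⟨U, V, hU, hV, hsU, hsV, hdisj⟩ := t2_separation hne
  obtain ⟨x, hx, ⟨t, htU, htX, htY⟩, t', htV, htX', htY'⟩ :=
    ((hinj.eventually_eq_of_eval_eq.filter_mono (nhdsNE_le_cofinite a)).and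
      (((himage hs (hU.mem_nhds hsU)).and (himage hs' (hV.mem_nhds hsV))).filter_mono
        nhdsWithin_le_nhds)).exists
  exact disjoint_left.1 hdisj htU (hx t t' htX htX' (htY'.trans htY.symm) ▸ htV)

lemma eventually_exists_real (hinj : GenericallyInjective X Y) (hX : X.IsReal) (hY : Y.IsReal)
    {φ : ℂ → ℂ} {a : ℝ} (hφ : ∀ᶠ x : ℝ in 𝓝[≠] a, conj (φ x) = φ x)
    (hcov : ∀ᶠ x : ℂ in 𝓝[≠] a, ∃ s, X.eval s = (x : OnePoint ℂ) ∧
      Y.eval s = (φ x : OnePoint ℂ)) :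
    ∀ᶠ x : ℝ in 𝓝[≠] a, ∃ s : ℝ, X.eval (s : ℂ) = ((x : ℂ) : OnePoint ℂ) ∧
      Y.eval (s : ℂ) = (φ x : OnePoint ℂ) := by
  have hcoe := tendsto_ofReal_nhdsNE a
  filter_upwards [hφ, hcoe.eventually hcov,
    hcoe.eventually (hinj.eventually_eq_of_eval_eq.filter_mono (nhdsNE_le_cofinite _))]
    with x hx ⟨s, hXs, hYs⟩ huniq
  have hXc := hX.eval_conj hXs
  have hYc := hY.eval_conj hYs
  rw [Complex.conj_ofReal] at hXc
  rw [hx] at hYc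
  obtain ⟨t, rfl⟩ := Complex.conj_eq_iff_real.1 (huniq s (conj s) hXs hXc (hYc.trans hYs.symm))
  exact ⟨t, hXs, hYs⟩

end GenericallyInjective

lemma RationalMap.exists_tendsto_of_tendsto_toFun {ι : Type*} {U : Ultrafilter ι} {u : ι → ℂ}
    {y : ℂ} (hinf : X.evalInf = OnePoint.infty)
    (hu : Tendsto (fun i => X.toFun (u i)) U (𝓝 y)) : ∃ s, Tendsto u U (𝓝 s) := by
  have hbdd : Bornology.IsBounded (X.toFun ⁻¹' Metric.ball y 1) :=
    Bornology.isBounded_def.2 <| (RationalMap.tendsto_toFun_atInf hinf).eventually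
      (Bornology.isBounded_def.1 Metric.isBounded_ball)
  have hmem : u ⁻¹' closure (X.toFun ⁻¹' Metric.ball y 1) ∈ U :=
    (hu.eventually (Metric.ball_mem_nhds y one_pos)).mono fun _ hi => subset_closure hi
  obtain ⟨s, -, hs⟩ := hbdd.isCompact_closure.ultrafilter_le_nhds (U.map u)
    (le_principal_iff.2 hmem)
  exact ⟨s, hs⟩

lemma exists_parametrizesAt (hinf : X.evalInf = OnePoint.infty) {φ : ℂ → ℂ} {a : ℝ}
    (hφ : AnalyticAt ℂ φ a)
    (hreal : ∀ᶠ x : ℝ in 𝓝[≠] a, ∃ s : ℝ, X.eval (s : ℂ) = ((x : ℂ) : OnePoint ℂ) ∧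
      Y.eval (s : ℂ) = (φ x : OnePoint ℂ)) :
    ∃ s : ℝ, ParametrizesAt X Y φ a s := by
  obtain ⟨u, hu⟩ := hreal.choice
  set U := Ultrafilter.of (𝓝[≠] a)
  have hU : (U : Filter ℝ) ≤ 𝓝[≠] a := Ultrafilter.of_le _
  have hid : Tendsto ((↑) : ℝ → ℂ) U (𝓝 (a : ℂ)) :=
    (Complex.continuous_ofReal.tendsto a).mono_left (hU.trans nhdsWithin_le_nhds)
  have hXu : ∀ᶠ x in (U : Filter ℝ), X.toFun (u x) = x :=
    hU (hu.mono fun x hx => (RationalMap.eval_eq_coe_iff.1 hx.1).2)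
  obtain ⟨s, hs⟩ := RationalMap.exists_tendsto_of_tendsto_toFun (u := fun x => (u x : ℂ)) hinf
    (hid.congr' (hXu.mono fun _ => Eq.symm))
  obtain ⟨s, rfl⟩ : s ∈ range ((↑) : ℝ → ℂ) :=
    Complex.isometry_ofReal.isClosedEmbedding.isClosed_range.mem_of_tendsto hs
      (.of_forall fun x => mem_range_self (u x))
  have hXs : X.eval (s : ℂ) = ((a : ℂ) : OnePoint ℂ) :=
    RationalMap.eval_eq_coe_of_tendsto hs hid (hU (hu.mono fun _ => And.left))
  obtain ⟨hden, hXa⟩ := RationalMap.eval_eq_coe_iff.1 hXs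
  have hne : ∀ᶠ x in (U : Filter ℝ), (u x : ℂ) ∈ ({(s : ℂ)}ᶜ : Set ℂ) := by
    filter_upwards [hXu, hU self_mem_nhdsWithin] with x hx hxa hus
    rw [mem_singleton_iff.1 hus, hXa] at hx
    exact hxa (Complex.ofReal_injective hx.symm)
  refine ⟨s, hXs, eventually_eval_eq_of_frequently hden (by rwa [hXa]) ?_⟩
  refine (tendsto_nhdsWithin_iff.2 ⟨hs, hne⟩).frequently (Eventually.frequently ?_)
  filter_upwards [hU hu, hXu] with x hx hxX
  rw [hx.2, hxX]

lemma RationalMap.toFun_eq_sum_of_isPreconnected {A : Set ℂ} (hA : IsPreconnected A)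
    {c : ℕ → ℝ} {z₀ : ℂ} (hz₀ : z₀ ∈ A)
    (hden : ∀ z ∈ A, X.den.eval z ≠ 0 ∧ Y.den.eval z ≠ 0)
    (hrad : ∀ z ∈ A, ‖X.toFun z‖ₑ < (realSeries c).radius)
    (hgerm : ∀ᶠ t in 𝓝 z₀, Y.toFun t = (realSeries c).sum (X.toFun t)) {z : ℂ} (hz : z ∈ A) :
    Y.toFun z = (realSeries c).sum (X.toFun z) :=
  AnalyticOnNhd.eqOn_of_preconnected_of_eventuallyEq
    (g := fun t => (realSeries c).sum (X.toFun t)) (fun z hz => analyticAt_toFun (hden z hz).2)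
    (fun z hz => (realSeries.analyticAt_sum (hrad z hz)).comp (analyticAt_toFun (hden z hz).1))
    hA hz₀ hgerm hz

lemma RationalMap.IsReal.re_deriv_pos (hX : X.IsReal) {a b : ℝ}
    (hreg : ∀ t ∈ Ico a b, X.den.eval (t : ℂ) ≠ 0 ∧ deriv X.toFun t ≠ 0)
    (ha : 0 < (deriv X.toFun a).re) {t : ℝ} (ht : t ∈ Ico a b) : 0 < (deriv X.toFun t).re := by
  have hne : ∀ u ∈ Ico a b, (deriv X.toFun u).re ≠ 0 := fun u hu h₀ =>
    (hreg u hu).2 (by rw [← hX.ofReal_re_deriv (hreg u hu).1, h₀, Complex.ofReal_zero])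
  rcases hasDerivWithinAt_forall_lt_or_forall_gt_of_forall_ne (convex_Ico a b)
    (fun u hu => (hasDerivAt_realFun (hreg u hu).1).hasDerivWithinAt) hne with hneg | hpos
  · exact absurd (hneg a ⟨le_rfl, ht.1.trans_lt ht.2⟩) ha.not_gt
  · exact hpos t ht

lemma RationalMap.continuousOn_realFun {S : Set ℝ} (hS : ∀ t ∈ S, X.den.eval (t : ℂ) ≠ 0) :
    ContinuousOn X.realFun S := fun t ht =>
  (hasDerivAt_realFun (hS t ht)).continuousAt.continuousWithinAt

lemma RationalMap.IsReal.strictMonoOn_realFun (hX : X.IsReal) {a b : ℝ}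
    (hden : ∀ t ∈ Icc a b, X.den.eval (t : ℂ) ≠ 0)
    (hderiv : ∀ t ∈ Ico a b, deriv X.toFun t ≠ 0) (ha : 0 < (deriv X.toFun a).re) :
    StrictMonoOn X.realFun (Icc a b) := by
  refine strictMonoOn_of_deriv_pos (convex_Icc a b) (continuousOn_realFun hden) fun t ht => ?_
  rw [interior_Icc] at ht
  rw [(hasDerivAt_realFun (hden t (Ioo_subset_Icc_self ht))).deriv]
  exact hX.re_deriv_pos (fun u hu => ⟨hden u (Ico_subset_Icc_self hu), hderiv u hu⟩) ha
    (Ioo_subset_Ico_self ht)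

/-! ### The branch to the right of `s₀` -/

/-- `(X, Y)` parametrizes the series `∑ c n * x ^ n` at `0` by the real point `s₀`, where `X` is
increasing. The series has nonnegative coefficients and a positive radius of convergence. -/
structure IsIncreasingBranch (X Y : RationalMap) (c : ℕ → ℝ) (s₀ : ℝ) : Prop where
  isReal : X.IsReal
  coeff_nonneg : ∀ n, 0 ≤ c n
  radius_pos : 0 < (realSeries c).radius
  parametrizesAt : ParametrizesAt X Y (realSeries c).sum 0 s₀
  deriv_pos : 0 < (deriv X.toFun s₀).re

namespace IsIncreasingBranch

variable {c : ℕ → ℝ} {s₀ σ : ℝ}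

lemma realFun_eq_zero (h : IsIncreasingBranch X Y c s₀) : X.realFun s₀ = 0 := by
  rw [RationalMap.realFun, (RationalMap.eval_eq_coe_iff.1 h.parametrizesAt.1).2, Complex.zero_re]

lemma isRegularPt (h : IsIncreasingBranch X Y c s₀) : IsRegularPt X Y s₀ := by
  refine isRegularPt_iff.2 ⟨(RationalMap.eval_eq_coe_iff.1 h.parametrizesAt.1).1, fun h₀ => ?_,
    (RationalMap.eval_eq_coe_iff.1 h.parametrizesAt.2.self_of_nhds).1⟩
  simpa [h₀] using h.deriv_pos

lemma strictMonoOn (h : IsIncreasingBranch X Y c s₀) (hσ : X.den.eval (σ : ℂ) ≠ 0)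
    (hreg : ∀ t ∈ Ico s₀ σ, IsRegularPt X Y t) : StrictMonoOn X.realFun (Icc s₀ σ) := by
  refine h.isReal.strictMonoOn_realFun (fun t ht => ?_)
    (fun t ht => (isRegularPt_iff.1 (hreg t ht)).2.1) h.deriv_pos
  rcases ht.2.eq_or_lt with rfl | hlt
  exacts [hσ, (hreg t ⟨ht.1, hlt⟩).1]

lemma realFun_nonneg (h : IsIncreasingBranch X Y c s₀) (hs₀ : s₀ ≤ σ)
    (hσ : X.den.eval (σ : ℂ) ≠ 0) (hreg : ∀ t ∈ Ico s₀ σ, IsRegularPt X Y t) :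
    0 ≤ X.realFun σ := by
  rw [← h.realFun_eq_zero]
  exact (h.strictMonoOn hσ hreg).monotoneOn (left_mem_Icc.2 hs₀) (right_mem_Icc.2 hs₀) hs₀

lemma enorm_toFun (h : IsIncreasingBranch X Y c s₀) (hs₀ : s₀ ≤ σ)
    (hσ : X.den.eval (σ : ℂ) ≠ 0) (hreg : ∀ t ∈ Ico s₀ σ, IsRegularPt X Y t) :
    ‖X.toFun σ‖ₑ = ENNReal.ofReal (X.realFun σ) := by
  rw [← h.isReal.ofReal_realFun hσ, enorm_coe_eq_ofReal (h.realFun_nonneg hs₀ hσ hreg)]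

lemma toFun_eq_sum (h : IsIncreasingBranch X Y c s₀) (hs₀ : s₀ ≤ σ)
    (hreg : ∀ t ∈ Icc s₀ σ, IsRegularPt X Y t)
    (hrad : ∀ t ∈ Icc s₀ σ, ENNReal.ofReal (X.realFun t) < (realSeries c).radius) :
    Y.toFun σ = (realSeries c).sum (X.toFun σ) := by
  have hgerm : ∀ᶠ z in 𝓝 (s₀ : ℂ), Y.toFun z = (realSeries c).sum (X.toFun z) :=
    h.parametrizesAt.2.mono fun _ hz => (RationalMap.eval_eq_coe_iff.1 hz).2
  refine RationalMap.toFun_eq_sum_of_isPreconnected (A := (↑) '' Icc s₀ σ)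
    (isPreconnected_Icc.image _ Complex.continuous_ofReal.continuousOn)
    (mem_image_of_mem _ (left_mem_Icc.2 hs₀)) ?_ ?_ hgerm
    (mem_image_of_mem _ (right_mem_Icc.2 hs₀))
  · rintro _ ⟨t, ht, rfl⟩
    obtain ⟨hX, -, hY⟩ := isRegularPt_iff.1 (hreg t ht)
    exact ⟨hX, hY⟩
  · rintro _ ⟨t, ht, rfl⟩
    rw [h.enorm_toFun ht.1 (hreg t ht).1 fun u hu => hreg u ⟨hu.1, hu.2.le.trans ht.2⟩]
    exact hrad t ht

/-- If `X` first reached the radius of convergence `R` at a regular point `ρ`, inverting `X` near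
`ρ` would continue the series beyond `R`, against Pringsheim's theorem. -/
lemma radius_ne_ofReal_realFun (h : IsIncreasingBranch X Y c s₀) {ρ : ℝ} (hρ : s₀ < ρ)
    (hreg : ∀ t ∈ Icc s₀ ρ, IsRegularPt X Y t) :
    (realSeries c).radius ≠ ENNReal.ofReal (X.realFun ρ) := by
  intro hrad
  have hρI : ρ ∈ Icc s₀ ρ := right_mem_Icc.2 hρ.le
  have hregI : ∀ t ∈ Ico s₀ ρ, IsRegularPt X Y t := fun t ht => hreg t (Ico_subset_Icc_self ht)
  have hmono := h.strictMonoOn (hreg ρ hρI).1 hregI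
  have hpos : 0 < X.realFun ρ := h.realFun_eq_zero ▸ hmono (left_mem_Icc.2 hρ.le) hρI hρ
  have hsum : ∀ t ∈ Ico s₀ ρ, Y.toFun t = (realSeries c).sum (X.toFun t) := fun t ht =>
    h.toFun_eq_sum ht.1 (fun u hu => hregI u ⟨hu.1, hu.2.trans_lt ht.2⟩) fun u hu =>
      hrad ▸ (ENNReal.ofReal_lt_ofReal_iff hpos).2
        (hmono ⟨hu.1, hu.2.trans ht.2.le⟩ hρI (hu.2.trans_lt ht.2))
  obtain ⟨g, hg, hYg⟩ := (hreg ρ hρI).exists_eventuallyEq_comp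
  rw [← h.isReal.ofReal_realFun (hreg ρ hρI).1] at hg
  have hmap := nhdsLT_le_map hρ
    (RationalMap.continuousOn_realFun fun t ht => (hreg t ht).1) hmono
  refine realSeries.not_eventually_eq_sum_of_radius_eq h.coeff_nonneg hpos hrad hg
    ((eventually_map.2 ?_).filter_mono hmap)
  filter_upwards [Complex.continuous_ofReal.continuousWithinAt.eventually hYg,
    Ico_mem_nhdsLT hρ] with t htg ht
  rw [h.isReal.ofReal_realFun (hregI t ht).1, ← htg, hsum t ht]

lemma ofReal_realFun_lt_radius (h : IsIncreasingBranch X Y c s₀) (hs₀ : s₀ ≤ σ)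
    (hreg : ∀ t ∈ Icc s₀ σ, IsRegularPt X Y t) :
    ENNReal.ofReal (X.realFun σ) < (realSeries c).radius := by
  by_contra! hle
  set R := (realSeries c).radius.toReal
  have hR : ENNReal.ofReal R = (realSeries c).radius :=
    ENNReal.ofReal_toReal (ne_top_of_le_ne_top ENNReal.ofReal_ne_top hle)
  have hR₀ : 0 < R := ENNReal.ofReal_pos.1 (hR ▸ h.radius_pos)
  have hRσ : R ≤ X.realFun σ := (ENNReal.ofReal_le_ofReal_iff' .. |>.1 (hR ▸ hle)).resolve_right
    hR₀.not_ge
  obtain ⟨ρ, hρ, hρR⟩ := intermediate_value_Icc hs₀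
    (RationalMap.continuousOn_realFun fun t ht => (hreg t ht).1)
    ⟨h.realFun_eq_zero ▸ hR₀.le, hRσ⟩
  have hρs₀ : s₀ ≠ ρ := by
    rintro rfl
    exact hR₀.ne (h.realFun_eq_zero.symm.trans hρR)
  exact h.radius_ne_ofReal_realFun (hρ.1.lt_of_ne hρs₀)
    (fun t ht => hreg t ⟨ht.1, ht.2.trans hρ.2⟩) (by rw [hρR, hR])

lemma hasSum (h : IsIncreasingBranch X Y c s₀) (hs₀ : s₀ ≤ σ)
    (hreg : ∀ t ∈ Icc s₀ σ, IsRegularPt X Y t) :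
    HasSum (fun n => (c n : ℂ) * (X.realFun σ : ℂ) ^ n) (Y.toFun σ) := by
  have hσ := (hreg σ (right_mem_Icc.2 hs₀)).1
  have hnorm := h.enorm_toFun hs₀ hσ fun t ht => hreg t (Ico_subset_Icc_self ht)
  rw [h.isReal.ofReal_realFun hσ, h.toFun_eq_sum hs₀ hreg fun t ht =>
    h.ofReal_realFun_lt_radius ht.1 fun u hu => hreg u ⟨hu.1, hu.2.trans ht.2⟩]
  exact realSeries.hasSum (hnorm ▸ h.ofReal_realFun_lt_radius hs₀ hreg)

lemma coeff_eq_zero_of_isBigO (h : IsIncreasingBranch X Y c s₀) {l : Filter ℝ} [l.NeBot]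
    {m : Filter ℂ} (hlm : Tendsto ((↑) : ℝ → ℂ) l m)
    (hX : Tendsto X.toFun m (cobounded ℂ))
    (hreg : ∀ᶠ t in l, s₀ ≤ t ∧ ∀ u ∈ Icc s₀ t, IsRegularPt X Y u) {N n : ℕ}
    (hO : Y.toFun =O[m] fun z => X.toFun z ^ N) (hn : N < n) : c n = 0 := by
  have hden : ∀ᶠ t : ℝ in l, (X.realFun t : ℂ) = X.toFun t :=
    hreg.mono fun t ht => h.isReal.ofReal_realFun (ht.2 t (right_mem_Icc.2 ht.1)).1
  have hξ : Tendsto X.realFun l atTop := by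
    refine (tendsto_norm_cobounded_atTop.comp (hX.comp hlm)).congr' ?_
    filter_upwards [hreg, hden] with t ht htX
    have hpos := h.realFun_nonneg ht.1 (ht.2 t (right_mem_Icc.2 ht.1)).1 fun u hu =>
      ht.2 u (Ico_subset_Icc_self hu)
    rw [Function.comp_apply, Function.comp_apply, ← htX, Complex.norm_of_nonneg hpos]
  have hη : (fun t : ℝ => Y.toFun t) =O[l] fun t => X.realFun t ^ N := by
    refine (hO.comp_tendsto hlm).trans (IsBigO.of_bound' ?_)
    filter_upwards [hden] with t ht
    rw [Function.comp_apply, ← ht, norm_pow, norm_pow, Complex.norm_real]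
  exact coeff_eq_zero_of_isBigO_pow h.coeff_nonneg hξ
    (hreg.mono fun t ht => h.hasSum ht.1 ht.2) hη hn

lemma exists_not_isRegularPt (h : IsIncreasingBranch X Y c s₀)
    (hinf : X.evalInf = OnePoint.infty) (hnonpoly : ∀ N, ∃ n, N ≤ n ∧ c n ≠ 0) :
    ∃ t : ℝ, s₀ ≤ t ∧ ¬ IsRegularPt X Y t := by
  by_contra! hreg
  obtain ⟨N, hN⟩ := RationalMap.exists_isBigO_pow_atInf Y hinf
  obtain ⟨n, hn, hcn⟩ := hnonpoly (N + 1)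
  exact hcn <| h.coeff_eq_zero_of_isBigO (RCLike.tendsto_ofReal_atTop_cobounded ℂ)
    (RationalMap.tendsto_toFun_atInf hinf)
    ((eventually_ge_atTop s₀).mono fun t ht => ⟨ht, fun u hu => hreg u hu.1⟩) hN hn

lemma den_ne_zero (h : IsIncreasingBranch X Y c s₀) (hσ : s₀ < σ)
    (hreg : ∀ t ∈ Ico s₀ σ, IsRegularPt X Y t) (hnonpoly : ∀ N, ∃ n, N ≤ n ∧ c n ≠ 0) :
    X.den.eval (σ : ℂ) ≠ 0 := by
  intro hpole
  obtain ⟨N, hN⟩ := RationalMap.exists_isBigO_pow_nhdsNE Y hpole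
  obtain ⟨n, hn, hcn⟩ := hnonpoly (N + 1)
  refine hcn <| h.coeff_eq_zero_of_isBigO
    ((tendsto_ofReal_nhdsNE σ).mono_left (nhdsLT_le_nhdsNE σ))
    (RationalMap.tendsto_toFun_nhdsNE hpole) ?_ hN hn
  filter_upwards [Ico_mem_nhdsLT hσ] with t ht
  exact ⟨ht.1, fun u hu => hreg u ⟨hu.1, hu.2.trans_lt ht.2⟩⟩

lemma exists_isLeast_isCriticalPt (h : IsIncreasingBranch X Y c s₀)
    (hinf : X.evalInf = OnePoint.infty) (hnonpoly : ∀ N, ∃ n, N ≤ n ∧ c n ≠ 0) :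
    ∃ σ : ℝ, s₀ < σ ∧ IsLeast {s : ℝ | s₀ ≤ s ∧ IsCriticalPt X Y s} σ ∧
      X.den.eval (σ : ℂ) ≠ 0 ∧ ∀ t ∈ Ico s₀ σ, IsRegularPt X Y t := by
  set T := {t : ℝ | s₀ ≤ t ∧ ¬ IsRegularPt X Y t}
  have hT : IsClosed T := isClosed_Ici.inter
    ((isClosed_setOf_not_isRegularPt X Y).preimage Complex.continuous_ofReal)
  obtain ⟨⟨hle, hcrit⟩, hmin⟩ :=
    hT.isLeast_csInf (h.exists_not_isRegularPt hinf hnonpoly) ⟨s₀, fun t ht => ht.1⟩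
  set σ := sInf T
  have hσ : s₀ < σ := by
    refine hle.lt_of_ne fun heq => hcrit ?_
    rw [← heq]
    exact h.isRegularPt
  have hreg : ∀ t ∈ Ico s₀ σ, IsRegularPt X Y t := fun t ht => by
    by_contra hns
    exact ht.2.not_ge (hmin ⟨ht.1, hns⟩)
  have hden := h.den_ne_zero hσ hreg hnonpoly
  refine ⟨σ, hσ, ⟨⟨hle, ?_⟩, fun t ht => hmin ⟨ht.1, fun htreg => htreg.2 ht.2⟩⟩, hden, hreg⟩
  by_contra hns
  exact hcrit ⟨hden, hns⟩

lemma radius_eq (h : IsIncreasingBranch X Y c s₀) (hinj : GenericallyInjective X Y)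
    (hXc : X.IsNonconstant) (hσ : s₀ < σ) (hcrit : IsCriticalPt X Y σ)
    (hden : X.den.eval (σ : ℂ) ≠ 0) (hreg : ∀ t ∈ Ico s₀ σ, IsRegularPt X Y t) :
    (realSeries c).radius = ENNReal.ofReal (X.realFun σ) := by
  have hregIcc : ∀ t ∈ Ico s₀ σ, ∀ u ∈ Icc s₀ t, IsRegularPt X Y u := fun t ht u hu =>
    hreg u ⟨hu.1, hu.2.trans_lt ht.2⟩
  have hlt : ∀ t ∈ Ico s₀ σ, ENNReal.ofReal (X.realFun t) < (realSeries c).radius :=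
    fun t ht => h.ofReal_realFun_lt_radius ht.1 (hregIcc t ht)
  have hge : ENNReal.ofReal (X.realFun σ) ≤ (realSeries c).radius := by
    have hcont : Tendsto X.realFun (𝓝[<] σ) (𝓝 (X.realFun σ)) :=
      (RationalMap.hasDerivAt_realFun hden).continuousAt.continuousWithinAt
    refine le_of_tendsto (ENNReal.tendsto_ofReal hcont) ?_
    filter_upwards [Ico_mem_nhdsLT hσ] with t ht
    exact (hlt t ht).le
  refine hge.antisymm' (not_lt.1 fun hgt => ?_)
  rw [← h.enorm_toFun hσ.le hden hreg] at hgt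
  refine hinj.not_isCriticalPt hXc hden (realSeries.analyticAt_sum hgt)
    (frequently_nhdsNE_ofReal ?_) hcrit
  filter_upwards [Ico_mem_nhdsLT hσ] with t ht
  rw [RationalMap.eval_eq_coe_toFun (isRegularPt_iff.1 (hreg t ht)).2.2,
    h.toFun_eq_sum ht.1 (hregIcc t ht) fun u hu => hlt u ⟨hu.1, hu.2.trans_lt ht.2⟩]

end IsIncreasingBranch

end Parametrization

theorem statement17_general {X Y : RationalMap} (hinj : GenericallyInjective X Y)
    (hX : X.IsReal) (hY : Y.IsReal) (hinf : X.evalInf = OnePoint.infty) {φ : ℂ → ℂ} {c : ℕ → ℝ}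
    (hφ : ∀ᶠ x in 𝓝 (0 : ℂ), HasSum (fun n : ℕ => (c n : ℂ) * x ^ n) (φ x))
    (hc : ∀ n, 0 ≤ c n) (hnonpoly : ∀ N : ℕ, ∃ n : ℕ, N ≤ n ∧ c n ≠ 0)
    (hcov : ∀ᶠ x : ℂ in 𝓝[≠] 0, ∃ s, X.eval s = (x : OnePoint ℂ) ∧
      Y.eval s = (φ x : OnePoint ℂ)) :
    (∃! s₀ : ℝ, ParametrizesAt X Y φ 0 s₀) ∧
    ∀ s₀ : ℝ, ParametrizesAt X Y φ 0 s₀ → (∃ d : ℝ, deriv X.toFun (s₀ : ℂ) = d ∧ 0 < d) →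
      ∃ sc : ℝ, IsLeast {s : ℝ | s₀ ≤ s ∧ IsCriticalPt X Y s} sc ∧
        ∃ xc : ℝ, X.toFun sc = xc ∧ 0 < xc ∧ HasDominantSingularityAt c xc := by
  have hXc := RationalMap.isNonconstant_of_evalInf hinf
  have hrad := realSeries.radius_pos_of_eventually hφ
  have hsum := realSeries.eventuallyEq_sum hφ
  constructor
  · have hφreal : ∀ᶠ x : ℝ in 𝓝[≠] 0, conj (φ x) = φ x :=
      ((Complex.continuous_ofReal.tendsto' 0 0 Complex.ofReal_zero).eventually hφ).mono
        (fun _ => realSeries.conj_eq_of_hasSum) |>.filter_mono nhdsWithin_le_nhds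
    have hana : AnalyticAt ℂ φ (0 : ℝ) := by
      rw [Complex.ofReal_zero]
      exact (realSeries.analyticAt_sum (by simpa using hrad)).congr hsum.symm
    obtain ⟨s₀, hs₀⟩ := exists_parametrizesAt hinf hana
      (hinj.eventually_exists_real hX hY hφreal (by simpa using hcov))
    rw [Complex.ofReal_zero] at hs₀
    exact ⟨s₀, hs₀, fun s hs =>
      Complex.ofReal_injective (hinj.parametrizesAt_unique hXc hs hs₀)⟩
  · rintro s₀ hs₀ ⟨d, hd, hd₀⟩
    have hbranch : IsIncreasingBranch X Y c s₀ :=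
      ⟨hX, hc, hrad, hs₀.congr hsum, by rwa [hd, Complex.ofReal_re]⟩
    obtain ⟨σ, hσ, hleast, hden, hreg⟩ := hbranch.exists_isLeast_isCriticalPt hinf hnonpoly
    have hpos : 0 < X.realFun σ := hbranch.realFun_eq_zero ▸ hbranch.strictMonoOn hden hreg
      (left_mem_Icc.2 hσ.le) (right_mem_Icc.2 hσ.le) hσ
    exact ⟨σ, hleast, X.realFun σ, (hX.ofReal_realFun hden).symm, hpos,
      realSeries.hasDominantSingularityAt hc hpos
        (hbranch.radius_eq hinj hXc hσ hleast.1.2 hden hreg)⟩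

/-- Proposition `RP dom sing` (i)-(ii): let `φ(x) = Σ c_n x^n` be a
non-polynomial function analytic near `0` with nonnegative coefficients, satisfying
`E(x, φ(x)) = 0` near `0`, where the irreducible curve `E = 0` has a real proper rational
parametrization `(X,Y)` with `X(∞) = ∞`.  Then (i) there is a unique `s₀ ∈ ℝ` such that
`(P, s₀)` parametrizes `φ` locally at `0`; and (ii) assuming `X′(s₀) > 0`, the set
`{s ≥ s₀ : s critical}` has a least element `s_c` (so `s_c` is finite and is a critical
point), and `φ` has its dominant singularity at `x_c = X(s_c) > 0`: its radius of
convergence equals `x_c` and it admits no analytic continuation to any neighborhood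
of `x_c`. -/
theorem statement17 (E : MvPolynomial (Fin 2) ℂ) (hE : Irreducible E)
    (X Y : RationalMap) (hpar : IsParametrization E X Y) (hprop : IsProper E X Y)
    (hreal_X : X.IsReal) (hreal_Y : Y.IsReal)
    (hXinf : X.evalInf = OnePoint.infty)
    (φ : ℂ → ℂ) (c : ℕ → ℝ) (r : ℝ) (hr : 0 < r)
    (hc : ∀ x : ℂ, ‖x‖ < r → HasSum (fun n : ℕ => (c n : ℂ) * x ^ n) (φ x))
    (hc_nonneg : ∀ n, 0 ≤ c n)
    (hnonpoly : ∀ N : ℕ, ∃ n : ℕ, N ≤ n ∧ c n ≠ 0)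
    (heq : ∀ᶠ x in nhds (0 : ℂ), evalE E x (φ x) = 0) :
    (∃! s₀ : ℝ, X.eval (s₀ : ℂ) = ((0 : ℂ) : OnePoint ℂ) ∧
        ∀ᶠ t in nhds ((s₀ : ℝ) : ℂ), Y.eval t = ((φ (X.toFun t) : ℂ) : OnePoint ℂ)) ∧
    (∀ s₀ : ℝ,
      (X.eval ((s₀ : ℝ) : ℂ) = ((0 : ℂ) : OnePoint ℂ) ∧
        ∀ᶠ t in nhds ((s₀ : ℝ) : ℂ), Y.eval t = ((φ (X.toFun t) : ℂ) : OnePoint ℂ)) →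
      (∃ d : ℝ, deriv X.toFun ((s₀ : ℝ) : ℂ) = (d : ℂ) ∧ 0 < d) →
      ∃ sc : ℝ, IsLeast {s : ℝ | s₀ ≤ s ∧ IsCriticalPt X Y ((s : ℝ) : ℂ)} sc ∧
        ∃ xc : ℝ, X.toFun ((sc : ℝ) : ℂ) = (xc : ℂ) ∧ 0 < xc ∧
          (∀ x : ℂ, ‖x‖ < xc → Summable (fun n : ℕ => (c n : ℂ) * x ^ n)) ∧
          (∀ x : ℝ, xc < x → ¬ Summable (fun n : ℕ => c n * x ^ n)) ∧
          (¬ ∃ (g : ℂ → ℂ) (ε : ℝ), 0 < ε ∧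
              (∀ w ∈ Metric.ball ((xc : ℝ) : ℂ) ε, AnalyticAt ℂ g w) ∧
              ∀ x : ℂ, ‖x‖ < xc → x ∈ Metric.ball ((xc : ℝ) : ℂ) ε →
                g x = ∑' n : ℕ, (c n : ℂ) * x ^ n)) := by
  exact statement17_general
    (hprop.genericallyInjective hpar (RationalMap.isNonconstant_of_evalInf hXinf)) hreal_X hreal_Y
    hXinf (eventually_of_mem (Metric.ball_mem_nhds 0 hr) fun x hx => hc x (mem_ball_zero_iff.1 hx))
    hc_nonneg hnonpoly (hprop.eventually_exists_eval_eq (heq.filter_mono nhdsWithin_le_nhds))
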